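/- (Lemma 5) Let X^n ⊂ ℝ^d (d ≥ 2) and let y ∈ ℝ^d lie outside the convex hull cov(X^n) of X^n. Then there exists u_0 ∈ S^{d−1} such that D(A_{u_0}^T y, X_{u_0}^n) = λ*(X_{u_0}^n); that is, the A_{u_0}-projection of y is a maximum-depth point of the projected sample X_{u_0}^n in ℝ^{d−1}. -/

import Mathlib

open scoped RealInnerProductSpace
open MeasureTheory

noncomputable section

/-- `E d` is the Euclidean space `ℝ^d`. -/
abbrev E (d : ℕ) : Type := EuclideanSpace ℝ (Fin d)

/-- A sample `X` of `n` points in `ℝ^d` is in general position if no affine hyperplane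
(encoded as `{x | ⟪v, x⟫ = c}` for some `v ≠ 0`) contains more than `d` of the points. -/
def inGeneralPosition {d n : ℕ} (X : Fin n → E d) : Prop :=
  ∀ v : E d, v ≠ 0 → ∀ c : ℝ, ({i : Fin n | ⟪v, X i⟫ = c} : Set (Fin n)).ncard ≤ d

/-- Number of sample points in the closed halfspace `{z | ⟪u, z⟫ ≤ ⟪u, x⟫}`. -/
def sideCount {d n : ℕ} (X : Fin n → E d) (u x : E d) : ℕ :=
  ({i : Fin n | ⟪u, X i⟫ ≤ ⟪u, x⟫} : Set (Fin n)).ncard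

/-- Tukey's halfspace depth of `x` with respect to the sample `X`. -/
def depth {d n : ℕ} (X : Fin n → E d) (x : E d) : ℝ :=
  sInf {r : ℝ | ∃ u : E d, ‖u‖ = 1 ∧ r = (sideCount X u x : ℝ) / (n : ℝ)}

/-- The maximum Tukey depth `λ*` of the sample `X`. -/
def maxDepth {d n : ℕ} (X : Fin n → E d) : ℝ :=
  sSup (Set.range (depth X))

/-- The set `M(X)` of deepest points. -/
def MSet {d n : ℕ} (X : Fin n → E d) : Set (E d) :=
  {x | depth X x = maxDepth X}

/-- `U_x`: the set of optimal (unit) directions realizing the depth at `x`. -/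
def USet {d n : ℕ} (X : Fin n → E d) (x : E d) : Set (E d) :=
  {u | ‖u‖ = 1 ∧ (sideCount X u x : ℝ) / (n : ℝ) = depth X x}

/-- `H_{x,y}`: the open hemisphere of unit directions `u` with `⟪u, x⟫ < ⟪u, y⟫`. -/
def HSet {d : ℕ} (x y : E d) : Set (E d) :=
  {u | ‖u‖ = 1 ∧ ⟪u, x⟫ < ⟪u, y⟫}

/-- `B_z`. -/
def BSet {d n : ℕ} (X : Fin n → E d) (z : E d) : Set (E d) :=
  {x | x ∈ MSet X ∧ USet X x ∩ HSet x z = ∅}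

/-- `B̃_z = B_z \ {z}`. -/
def BTilde {d n : ℕ} (X : Fin n → E d) (z : E d) : Set (E d) :=
  BSet X z \ {z}

/-- `v` is a unit vector normal to an affine hyperplane spanned by `d` of the sample points. -/
def normalToSampleHyperplane {d n : ℕ} (X : Fin n → E d) (v : E d) : Prop :=
  ‖v‖ = 1 ∧ ∃ (s : Finset (Fin n)) (c : ℝ), s.card = d ∧
    (affineSpan ℝ (X '' (s : Set (Fin n))) : Set (E d)) = {x : E d | ⟪v, x⟫ = c}

/-- Condition (2.1) on a unit direction `u`. -/
def cond21 {d n : ℕ} (X : Fin n → E d) (u : E d) : Prop :=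
  ∀ v : E d, normalToSampleHyperplane X v → ⟪u, v⟫ ≠ 0

/-- `A` represents the columns of a `d × (d-1)` matrix which together with the unit
vector `u` form an orthonormal basis of `ℝ^d`. -/
def IsAu {d : ℕ} (u : E d) (A : Fin (d - 1) → E d) : Prop :=
  ‖u‖ = 1 ∧ Orthonormal ℝ A ∧ ∀ j, ⟪A j, u⟫ = 0

/-- The `A_u`-projection `A_u^T x ∈ ℝ^{d-1}` of a point `x ∈ ℝ^d`. -/
def proj {d : ℕ} (A : Fin (d - 1) → E d) (x : E d) : E (d - 1) :=
  (WithLp.equiv 2 (Fin (d - 1) → ℝ)).symm (fun j => ⟪A j, x⟫)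

/-- The embedding `A_u x = ∑ j x_j A_j ∈ ℝ^d` of a point `x ∈ ℝ^{d-1}`. -/
def embed {d : ℕ} (A : Fin (d - 1) → E d) (x : E (d - 1)) : E d :=
  ∑ j, x j • A j

/-- `λ₀ = inf_{u ∈ S^{d-1}} λ*(X_u^n)`, the infimum over all directions of the maximum
Tukey depth of the projected sample. -/
def lambda0 {d n : ℕ} (X : Fin n → E d) : ℝ :=
  sInf {r : ℝ | ∃ (u : E d) (A : Fin (d - 1) → E d),
    IsAu u A ∧ r = maxDepth (fun i => proj A (X i))}

/-- The average (barycenter) of a set `K ⊆ ℝ^d`, taken with respect to the Hausdorff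
measure of dimension equal to the affine dimension of `K`. -/
def setAverage {d : ℕ} (K : Set (E d)) : E d :=
  (μH[(Module.finrank ℝ (affineSpan ℝ K).direction : ℝ)] K).toReal⁻¹ •
    ∫ x in K, x ∂(μH[(Module.finrank ℝ (affineSpan ℝ K).direction : ℝ)])

/-- Tukey's halfspace median: the average of all deepest points. -/
def TukeyMedian {d n : ℕ} (X : Fin n → E d) : E d :=
  setAverage (MSet X)

/-- `m` contaminating points suffice to break down the Tukey median at `X`. -/
def breaksDown {d n : ℕ} (X : Fin n → E d) (m : ℕ) : Prop :=
  ∀ C : ℝ, ∃ Y : Fin m → E d, C < ‖TukeyMedian (Fin.append X Y) - TukeyMedian X‖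

/-- The finite sample (additional) breakdown point of the Tukey median at `X`. -/
def FSBP {d n : ℕ} (X : Fin n → E d) : ℝ :=
  sInf {r : ℝ | ∃ m : ℕ, 1 ≤ m ∧ breaksDown X m ∧ r = (m : ℝ) / ((n : ℝ) + (m : ℝ))}

/-! Place `y` at the origin and separate it from the sample by a vector `w` with `⟪w, X i⟫ > 0`.
Project the sample centrally to points `P i` of the hyperplane `⟪w, ·⟫ = 1`. For `u` in that
hyperplane, the halfspaces at the origin with normals orthogonal to `u` contain the same sample
points as the halfspaces at `u` do among the `P i`, so projecting along `u` gives the origin the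
depth of `u` with respect to `P`. Let `m` be the largest number for which the depth region of level
`m` of `P` is nonempty, and order this compact region by how far `u` falls short, in each direction
`v`, of having more than `m` of the `P i` behind it. By Zorn's lemma there is a maximal `u`. If
after projection along `u` some point `x` were deeper than the origin, then moving `u` slightly in
the direction of `x - ⟪w, x⟫ • u` would make no shortfall worse. By maximality none would improve
either, and this is contradicted by any direction `v` with at most `m` of the `P i` behind `u`.
-/

section Existence

open Set

lemma exists_inner_lt_of_notMem_convexHull {F : Type*} [NormedAddCommGroup F]
    [InnerProductSpace ℝ F] [CompleteSpace F] {s : Set F} (hs : s.Finite) {y : F}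
    (hy : y ∉ convexHull ℝ s) : ∃ w : F, ∀ x ∈ s, ⟪w, y⟫ < ⟪w, x⟫ := by
  obtain ⟨f, c, hfy, hfs⟩ := geometric_hahn_banach_point_closed (convex_convexHull ℝ s)
    (hs.isClosed_convexHull (𝕜 := ℝ)) hy
  refine ⟨(InnerProductSpace.toDual ℝ F).symm f, fun x hx => ?_⟩
  simpa only [InnerProductSpace.toDual_symm_apply] using
    hfy.trans (hfs x (subset_convexHull ℝ s hx))

lemma exists_maximal_of_isCompact {α : Type*} [TopologicalSpace α] {r : α → α → Prop}
    [Std.Refl r] [IsTrans α r] (hr : ∀ a, IsClosed {b | r a b}) {s : Set α} (hs : IsCompact s)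
    (hne : s.Nonempty) : ∃ a ∈ s, ∀ b ∈ s, r a b → r b a := by
  have : Nonempty s := hne.to_subtype
  have : CompactSpace s := isCompact_iff_compactSpace.1 hs
  have hclosed (a : s) : IsClosed {b : s | r a b} := (hr a).preimage continuous_subtype_val
  have hbounded (c : Set s) (hc : IsChain (fun a b : s => r a b) c) (hcne : c.Nonempty) :
      ∃ b : s, ∀ a ∈ c, r a b := by
    have : Nonempty c := hcne.to_subtype
    have hdir : Directed (· ⊇ ·) fun a : c => {b : s | r a b} := fun a b => by
      rcases eq_or_ne a b with rfl | hab
      · exact ⟨a, subset_rfl, subset_rfl⟩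
      rcases hc a.2 b.2 (Subtype.coe_injective.ne hab) with h | h
      · exact ⟨b, fun _ => _root_.trans h, subset_rfl⟩
      · exact ⟨a, subset_rfl, fun _ => _root_.trans h⟩
    obtain ⟨b, hb⟩ := IsCompact.nonempty_iInter_of_directed_nonempty_isCompact_isClosed _ hdir
      (fun a => ⟨a, refl (r := r) (a : α)⟩) (fun a => (hclosed a).isCompact)
      (fun a => hclosed a)
    exact ⟨b, fun a ha => mem_iInter.1 hb ⟨a, ha⟩⟩
  obtain ⟨a, ha⟩ := exists_maximal_of_nonempty_chains_bounded hbounded _root_.trans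
  exact ⟨a, a.2, fun b hb => ha ⟨b, hb⟩⟩

end Existence

section SideCount

variable {d k n : ℕ} {X : Fin n → E d} {v x x' : E d}

lemma sideCount_le_sideCount {Y : Fin n → E k} {v' y : E k}
    (h : ∀ i, ⟪v, X i⟫ ≤ ⟪v, x⟫ → ⟪v', Y i⟫ ≤ ⟪v', y⟫) : sideCount X v x ≤ sideCount Y v' y :=
  Set.ncard_le_ncard h (Set.toFinite _)

lemma sideCount_mono (h : ⟪v, x⟫ ≤ ⟪v, x'⟫) : sideCount X v x ≤ sideCount X v x' :=
  sideCount_le_sideCount fun _ hi => hi.trans h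

lemma sideCount_zero_left : sideCount X 0 x = n := by
  simp [sideCount, Set.ncard_univ]

lemma sideCount_le : sideCount X v x ≤ n :=
  (sideCount_le_sideCount fun _ _ => by simp).trans_eq (sideCount_zero_left (X := X) (x := x))

lemma sideCount_smul_left {c : ℝ} (hc : 0 < c) : sideCount X (c • v) x = sideCount X v x := by
  simp only [sideCount, real_inner_smul_left, mul_le_mul_iff_right₀ hc]

lemma sideCount_sub (y : E d) : sideCount (fun i => X i - y) v (x - y) = sideCount X v x := by
  simp only [sideCount, inner_sub_right, sub_le_sub_iff_right]

lemma isClosed_setOf_le_sideCount (X : Fin n → E d) (v : E d) (m : ℕ) :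
    IsClosed {x | m ≤ sideCount X v x} := by
  have h : {x | m ≤ sideCount X v x} =
      ⋃ s ∈ {s : Set (Fin n) | m ≤ s.ncard}, ⋂ i ∈ s, {x | ⟪v, X i⟫ ≤ ⟪v, x⟫} := by
    ext x
    simp only [Set.mem_iUnion, Set.mem_iInter, Set.mem_ofPred_eq, exists_prop]
    exact ⟨fun hx => ⟨_, hx, fun i hi => hi⟩,
      fun ⟨s, hs, hsx⟩ => hs.trans (Set.ncard_le_ncard hsx (Set.toFinite _))⟩
  rw [h]
  exact (Set.toFinite _).isClosed_biUnion fun s _ => isClosed_biInter fun i _ =>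
    isClosed_le continuous_const (by fun_prop)

end SideCount

section DepthRegion

variable {d n m : ℕ} {X : Fin n → E d} {u u' : E d}

/-- The depth region of level `m`: the points all of whose closed halfspaces contain at least `m`
sample points. Arbitrary normals `v` are allowed instead of unit ones; the degenerate `v = 0` only
asks for `m ≤ n`. -/
def depthRegion (X : Fin n → E d) (m : ℕ) : Set (E d) :=
  {x | ∀ v, m ≤ sideCount X v x}

lemma depthRegion_subset_convexHull (hm : 0 < m) :
    depthRegion X m ⊆ convexHull ℝ (Set.range X) := by
  intro x hx
  by_contra hxX
  obtain ⟨v, hv⟩ := exists_inner_lt_of_notMem_convexHull (Set.finite_range X) hxX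
  have hcount : sideCount X v x = 0 := by
    rw [sideCount, Set.ncard_eq_zero, Set.eq_empty_iff_forall_notMem]
    exact fun i => (hv (X i) (Set.mem_range_self i)).not_ge
  exact (hm.trans_le (hx v)).ne' hcount

lemma isCompact_depthRegion (hm : 0 < m) : IsCompact (depthRegion X m) := by
  refine ((Set.finite_range X).isCompact_convexHull ℝ).of_isClosed_subset ?_
    (depthRegion_subset_convexHull hm)
  simp only [depthRegion, Set.ofPred_forall]
  exact isClosed_iInter fun v => isClosed_setOf_le_sideCount X v m

lemma mem_depthRegion_one (X : Fin n → E d) (i : Fin n) : X i ∈ depthRegion X 1 := fun _ =>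
  (Set.ncard_pos (Set.toFinite _)).2 ⟨i, by simp⟩

lemma exists_depthRegion_succ_eq_empty [NeZero n] (X : Fin n → E d) :
    ∃ m, 0 < m ∧ (depthRegion X m).Nonempty ∧ depthRegion X (m + 1) = ∅ := by
  by_contra! h
  have hne : (depthRegion X (n + 1)).Nonempty :=
    Nat.le_induction ⟨X 0, mem_depthRegion_one X 0⟩ (fun m hm => h m hm) (n + 1) (by omega)
  obtain ⟨x, hx⟩ := hne
  exact (hx 0).not_gt (Nat.lt_succ_of_le sideCount_le)

/-- The preorder of being at least as good as `u` at level `m`. If `m < n` and `s v` denotes the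
`(m + 1)`-st smallest of the numbers `⟪v, X i⟫`, then `m < sideCount X v u'` means
`s v ≤ ⟪v, u'⟫`, and `DepthLE X m u u'` says that
`min (⟪v, u⟫ - s v) 0 ≤ min (⟪v, u'⟫ - s v) 0` for every direction `v`. -/
def DepthLE (X : Fin n → E d) (m : ℕ) (u u' : E d) : Prop :=
  ∀ v, ⟪v, u⟫ ≤ ⟪v, u'⟫ ∨ m < sideCount X v u'

instance : Std.Refl (DepthLE X m) :=
  ⟨fun _ _ => Or.inl le_rfl⟩

instance : IsTrans (E d) (DepthLE X m) where
  trans _ _ _ h₁ h₂ v := by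
    rcases h₂ v with h₂ | h₂
    · exact (h₁ v).imp h₂.trans' fun h₁ => h₁.trans_le (sideCount_mono h₂)
    · exact Or.inr h₂

lemma isClosed_setOf_depthLE (X : Fin n → E d) (m : ℕ) (u : E d) :
    IsClosed {u' | DepthLE X m u u'} := by
  simp only [DepthLE, Set.ofPred_forall, Set.ofPred_or]
  exact isClosed_iInter fun v => (isClosed_le continuous_const (by fun_prop)).union
    (isClosed_setOf_le_sideCount X v (m + 1))

lemma DepthLE.mem_depthRegion (h : DepthLE X m u u') (hu : u ∈ depthRegion X m) :
    u' ∈ depthRegion X m := fun v =>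
  (h v).elim (fun hv => (hu v).trans (sideCount_mono hv)) le_of_lt

lemma exists_depthLE_maximal (hm : 0 < m) (hne : (depthRegion X m).Nonempty) :
    ∃ u ∈ depthRegion X m, ∀ u', DepthLE X m u u' → DepthLE X m u' u := by
  obtain ⟨u, hu, hmax⟩ :=
    exists_maximal_of_isCompact (isClosed_setOf_depthLE X m) (isCompact_depthRegion hm) hne
  exact ⟨u, hu, fun u' h => hmax u' (h.mem_depthRegion hu) h⟩

end DepthRegion

section ObliqueProjection

variable {F : Type*} [NormedAddCommGroup F] [InnerProductSpace ℝ F] {w u v x : F}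

/-- The map `x ↦ x - ⟪w, x⟫ • u`. If `⟪w, u⟫ = 1`, it is the linear projection along `u` onto the
hyperplane orthogonal to `w`. -/
def obliqueProj (w u x : F) : F :=
  x - ⟪w, x⟫ • u

lemma inner_obliqueProj_left : ⟪obliqueProj u w v, x⟫ = ⟪v, obliqueProj w u x⟫ := by
  simp only [obliqueProj, inner_sub_left, inner_sub_right, real_inner_smul_left, inner_smul_right,
    real_inner_comm v u, mul_comm]

lemma inner_obliqueProj_eq_zero (hwu : ⟪w, u⟫ = 1) (v : F) : ⟪obliqueProj u w v, u⟫ = 0 := by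
  rw [inner_obliqueProj_left, obliqueProj, hwu, one_smul, sub_self, inner_zero_right]

end ObliqueProjection

section CentralProjection

variable {d n m : ℕ} {X : Fin n → E d} {w u v x : E d}

/-- The central projection of the sample from the origin to the affine hyperplane
`{x | ⟪w, x⟫ = 1}`, meaningful when all the `⟪w, X i⟫` are positive. -/
def centralProj (w : E d) (X : Fin n → E d) (i : Fin n) : E d :=
  ⟪w, X i⟫⁻¹ • X i

lemma inner_centralProj_le_iff {i : Fin n} (hw : 0 < ⟪w, X i⟫) {c : ℝ} :
    ⟪v, centralProj w X i⟫ ≤ c ↔ ⟪v, X i⟫ ≤ ⟪w, X i⟫ * c := by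
  rw [centralProj, inner_smul_right, inv_mul_le_iff₀ hw]

lemma sideCount_centralProj (hw : ∀ i, 0 < ⟪w, X i⟫) :
    sideCount (centralProj w X) v u = sideCount X (obliqueProj u w v) 0 := by
  simp only [sideCount, inner_centralProj_le_iff (hw _), obliqueProj, inner_sub_left,
    real_inner_smul_left, inner_zero_right, sub_nonpos, real_inner_comm v u, mul_comm]

lemma inner_eq_one_of_mem_convexHull_centralProj (hw : ∀ i, 0 < ⟪w, X i⟫)
    (hu : u ∈ convexHull ℝ (Set.range (centralProj w X))) : ⟪w, u⟫ = 1 := by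
  have hsub : Set.range (centralProj w X) ⊆ {u | ⟪w, u⟫ = 1} := by
    rintro _ ⟨i, rfl⟩
    simp [centralProj, inner_smul_right, (hw i).ne']
  exact convexHull_min hsub (convex_hyperplane (innerₛₗ ℝ w).isLinear 1) hu

-- Let `z = obliqueProj w u x`. If `⟪v, z⟫ ≤ 0`, then `u + ε • z` lies behind `u` in direction `v`,
-- but for `ε ≤ 1 / ⟪w, X i⟫` not so far behind that its halfspace loses any of the more than `m`
-- sample points counted by `hx` for the normal `obliqueProj u w v`.
lemma exists_depthLE_centralProj_add_smul (hw : ∀ i, 0 < ⟪w, X i⟫) (hwu : ⟪w, u⟫ = 1)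
    (hx : ∀ v, ⟪v, u⟫ = 0 → m < sideCount X v x) :
    ∃ ε : ℝ, 0 < ε ∧ DepthLE (centralProj w X) m u (u + ε • obliqueProj w u x) := by
  obtain ⟨c, hc₀, hc⟩ : ∃ c > 0, ∀ i, ⟪w, X i⟫ ≤ c := by
    obtain ⟨c, hc⟩ := Finite.exists_le fun i => ⟪w, X i⟫
    exact ⟨max c 1, by positivity, fun i => (hc i).trans (le_max_left c 1)⟩
  refine ⟨c⁻¹, inv_pos.2 hc₀, fun v => ?_⟩
  set z := obliqueProj w u x with hz
  rw [inner_add_right, inner_smul_right]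
  rcases le_total 0 ⟪v, z⟫ with hvz | hvz
  · exact Or.inl (le_add_of_nonneg_right (by positivity))
  · refine Or.inr ((hx _ (inner_obliqueProj_eq_zero hwu v)).trans_le
      (sideCount_le_sideCount fun i hi => ?_))
    rw [inner_centralProj_le_iff (hw i), inner_add_right, inner_smul_right]
    have hvX : ⟪v, X i⟫ ≤ ⟪w, X i⟫ * ⟪v, u⟫ + ⟪v, z⟫ := by
      rw [inner_obliqueProj_left, inner_obliqueProj_left, ← hz, obliqueProj, inner_sub_right,
        inner_smul_right] at hi
      linarith
    have hshort : 1 * ⟪v, z⟫ ≤ ⟪w, X i⟫ * c⁻¹ * ⟪v, z⟫ :=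
      mul_le_mul_of_nonpos_right (mul_inv_le_one_of_le₀ (hc i) hc₀.le) hvz
    linarith

lemma exists_forall_orthogonal_sideCount [NeZero n] (hw : ∀ i, 0 < ⟪w, X i⟫) :
    ∃ u ≠ 0, ∃ m, (∀ v, ⟪v, u⟫ = 0 → m ≤ sideCount X v 0) ∧
      ∀ x, ∃ v, ⟪v, u⟫ = 0 ∧ sideCount X v x ≤ m := by
  obtain ⟨m, hm, hne, hempty⟩ := exists_depthRegion_succ_eq_empty (centralProj w X)
  obtain ⟨u, hu, hmax⟩ := exists_depthLE_maximal hm hne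
  have hwu : ⟪w, u⟫ = 1 :=
    inner_eq_one_of_mem_convexHull_centralProj hw (depthRegion_subset_convexHull hm hu)
  refine ⟨u, fun h => by simp [h] at hwu, m, fun v hv => ?_, fun x => ?_⟩
  · simpa only [sideCount_centralProj hw, obliqueProj, real_inner_comm v u, hv, zero_smul,
      sub_zero] using hu v
  · by_contra! hx
    obtain ⟨ε, hε, hle⟩ := exists_depthLE_centralProj_add_smul hw hwu hx
    obtain ⟨v, hv⟩ : ∃ v, sideCount (centralProj w X) v u ≤ m := by
      by_contra! h
      exact Set.eq_empty_iff_forall_notMem.1 hempty u h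
    have hvx : ⟪obliqueProj u w v, x⟫ ≤ 0 := by
      have hback := (hmax _ hle v).resolve_right hv.not_gt
      rw [inner_add_right, inner_smul_right, add_le_iff_nonpos_right] at hback
      rw [inner_obliqueProj_left]
      exact nonpos_of_mul_nonpos_right hback hε
    have hcount : sideCount X (obliqueProj u w v) x ≤ m :=
      (sideCount_mono (by rwa [inner_zero_right])).trans (sideCount_centralProj hw ▸ hv)
    exact (hx _ (inner_obliqueProj_eq_zero hwu v)).not_ge hcount

lemma exists_unit_forall_orthogonal_sideCount [NeZero d] {y : E d}
    (hy : y ∉ convexHull ℝ (Set.range X)) :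
    ∃ u, ‖u‖ = 1 ∧ ∃ m, (∀ v, ⟪v, u⟫ = 0 → m ≤ sideCount X v y) ∧
      ∀ x, ∃ v, ⟪v, u⟫ = 0 ∧ sideCount X v x ≤ m := by
  obtain rfl | hn := eq_or_ne n 0
  · obtain ⟨u, hu⟩ := exists_norm_eq (E d) zero_le_one
    exact ⟨u, hu, 0, fun _ _ => Nat.zero_le _, fun _ => ⟨0, inner_zero_left u, sideCount_le⟩⟩
  have : NeZero n := ⟨hn⟩
  obtain ⟨w, hw⟩ := exists_inner_lt_of_notMem_convexHull (Set.finite_range X) hy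
  obtain ⟨u, hu, m, hle, hge⟩ := exists_forall_orthogonal_sideCount (w := w)
    (X := fun i => X i - y) fun i => by
      simpa only [inner_sub_right, sub_pos] using hw (X i) (Set.mem_range_self i)
  have horth {v : E d} : ⟪v, ‖u‖⁻¹ • u⟫ = 0 ↔ ⟪v, u⟫ = 0 := by
    simp [inner_smul_right, hu]
  refine ⟨‖u‖⁻¹ • u, norm_smul_inv_norm hu, m, fun v hv => ?_, fun x => ?_⟩
  · simpa only [← sideCount_sub (X := X) y, sub_self] using hle v (horth.1 hv)
  · obtain ⟨v, hv, hvm⟩ := hge (x - y)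
    exact ⟨v, horth.2 hv, by rwa [sideCount_sub] at hvm⟩

end CentralProjection

section Depth

variable {k n m : ℕ} {Z : Fin n → E k} {v x y : E k}

lemma exists_unit_sideCount_le [NeZero k] (Z : Fin n → E k) (v x : E k) :
    ∃ e : E k, ‖e‖ = 1 ∧ sideCount Z e x ≤ sideCount Z v x := by
  obtain rfl | hv := eq_or_ne v 0
  · obtain ⟨e, he⟩ := exists_norm_eq (E k) zero_le_one
    exact ⟨e, he, sideCount_le.trans_eq sideCount_zero_left.symm⟩
  · exact ⟨‖v‖⁻¹ • v, norm_smul_inv_norm hv,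
      (sideCount_smul_left (inv_pos.2 (norm_pos_iff.2 hv))).le⟩

lemma depth_le_of_sideCount_le [NeZero k] (h : sideCount Z v x ≤ m) :
    depth Z x ≤ (m : ℝ) / n := by
  obtain ⟨e, he, hle⟩ := exists_unit_sideCount_le Z v x
  have hbdd : BddBelow {r : ℝ | ∃ u : E k, ‖u‖ = 1 ∧ r = (sideCount Z u x : ℝ) / n} :=
    ⟨0, by rintro _ ⟨u, -, rfl⟩; positivity⟩
  refine (csInf_le hbdd ⟨e, he, rfl⟩).trans ?_
  gcongr
  exact hle.trans h

lemma le_depth_of_mem_depthRegion [NeZero k] (h : y ∈ depthRegion Z m) :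
    (m : ℝ) / n ≤ depth Z y := by
  obtain ⟨e, he⟩ := exists_norm_eq (E k) zero_le_one
  refine le_csInf ⟨_, e, he, rfl⟩ ?_
  rintro _ ⟨u, -, rfl⟩
  gcongr
  exact h u

lemma depth_eq_maxDepth_of_mem_depthRegion [NeZero k] (hy : y ∈ depthRegion Z m)
    (h : ∀ x, ∃ v, sideCount Z v x ≤ m) : depth Z y = maxDepth Z := by
  have hgreatest : IsGreatest (Set.range (depth Z)) (depth Z y) := by
    refine ⟨⟨y, rfl⟩, ?_⟩
    rintro _ ⟨x, rfl⟩
    obtain ⟨v, hv⟩ := h x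
    exact (depth_le_of_sideCount_le hv).trans (le_depth_of_mem_depthRegion hy)
  exact hgreatest.csSup_eq.symm

end Depth

section Frame

variable {d n : ℕ} {u v : E d} {A : Fin (d - 1) → E d}

lemma finrank_eq_sub_one_add_one (hu : u ≠ 0) : Module.finrank ℝ (E d) = d - 1 + 1 := by
  have hd : d ≠ 0 := by
    rintro rfl
    exact hu (Subsingleton.elim u 0)
  rw [finrank_euclideanSpace_fin, Nat.sub_one_add_one hd]

lemma exists_isAu (hu : ‖u‖ = 1) : ∃ A, IsAu u A := by
  have hu₀ : u ≠ 0 := norm_ne_zero_iff.1 (hu ▸ one_ne_zero)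
  have := Fact.mk (finrank_eq_sub_one_add_one hu₀)
  let b := OrthonormalBasis.fromOrthogonalSpanSingleton (𝕜 := ℝ) (d - 1) hu₀
  exact ⟨fun j => b j, hu, b.orthonormal.comp_linearIsometry (Submodule.subtypeₗᵢ _),
    fun j => Submodule.mem_orthogonal_singleton_iff_inner_left.1 (b j).2⟩

lemma IsAu.inner_embed_left (hA : IsAu u A) (a : E (d - 1)) : ⟪embed A a, u⟫ = 0 := by
  simp only [embed, sum_inner, real_inner_smul_left, hA.2.2, mul_zero, Finset.sum_const_zero]

lemma IsAu.exists_embed_eq (hA : IsAu u A) (hv : ⟪v, u⟫ = 0) : ∃ a, embed A a = v := by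
  have hu₀ : u ≠ 0 := norm_ne_zero_iff.1 (hA.1 ▸ one_ne_zero)
  have := Fact.mk (finrank_eq_sub_one_add_one hu₀)
  have hspan : Submodule.span ℝ (Set.range A) = (ℝ ∙ u)ᗮ := by
    refine Submodule.eq_of_le_of_finrank_eq (Submodule.span_le.2 ?_) ?_
    · rintro _ ⟨j, rfl⟩
      exact Submodule.mem_orthogonal_singleton_iff_inner_left.2 (hA.2.2 j)
    · rw [finrank_span_eq_card hA.2.1.linearIndependent, Fintype.card_fin,
        Submodule.finrank_orthogonal_span_singleton (n := d - 1) hu₀]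
  have hv' : v ∈ Submodule.span ℝ (Set.range A) :=
    hspan ▸ Submodule.mem_orthogonal_singleton_iff_inner_left.2 hv
  obtain ⟨c, hc⟩ := (Submodule.mem_span_range_iff_exists_fun ℝ).1 hv'
  exact ⟨WithLp.toLp 2 c, hc⟩

lemma inner_proj (A : Fin (d - 1) → E d) (a : E (d - 1)) (x : E d) :
    ⟪a, proj A x⟫ = ⟪embed A a, x⟫ := by
  simp only [embed, sum_inner, real_inner_smul_left, PiLp.inner_apply a]
  exact Finset.sum_congr rfl fun j _ => mul_comm _ _

lemma proj_embed (hA : Orthonormal ℝ A) (a : E (d - 1)) : proj A (embed A a) = a := by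
  ext j
  simp [proj, embed, hA.inner_right_fintype]

lemma sideCount_proj (X : Fin n → E d) (a : E (d - 1)) (x : E d) :
    sideCount (fun i => proj A (X i)) a (proj A x) = sideCount X (embed A a) x := by
  simp only [sideCount, inner_proj]

end Frame

/-- **Lemma 5.** For every `y` outside the convex hull of the sample there is
a unit direction `u₀` such that the `A_{u₀}`-projection of `y` is a maximum-depth point of
the projected sample: `D(A_{u₀}^T y, X_{u₀}^n) = λ*(X_{u₀}^n)`. -/
theorem lemma5 {d n : ℕ} (hd : 2 ≤ d) (X : Fin n → E d) (y : E d)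
    (hy : y ∉ convexHull ℝ (Set.range X)) :
    ∃ (u₀ : E d) (A : Fin (d - 1) → E d), IsAu u₀ A ∧
      depth (fun i => proj A (X i)) (proj A y) = maxDepth (fun i => proj A (X i)) := by
  have : NeZero d := ⟨by omega⟩
  have : NeZero (d - 1) := ⟨by omega⟩
  obtain ⟨u, hu, m, hle, hge⟩ := exists_unit_forall_orthogonal_sideCount hy
  obtain ⟨A, hA⟩ := exists_isAu hu
  have hmem : proj A y ∈ depthRegion (fun i => proj A (X i)) m := fun a => by
    rw [sideCount_proj]
    exact hle _ (hA.inner_embed_left a)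
  refine ⟨u, A, hA, depth_eq_maxDepth_of_mem_depthRegion hmem fun x => ?_⟩
  obtain ⟨v, hv, hvm⟩ := hge (embed A x)
  obtain ⟨a, rfl⟩ := hA.exists_embed_eq hv
  rw [← sideCount_proj, proj_embed hA.2.1] at hvm
  exact ⟨a, hvm⟩
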